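/- arXiv:1012.1495 — 2 statements merged into one kernel-verified Lean document; each statement's English description precedes it below -/
import Mathlib

section
/- If P is a rational convex polygon without parallel edges, then every forward orbit of the outer billiard map T about P is periodic: for every forward orbit (M_k)_{k∈ℕ} there exists p ≥ 1 such that M_p = M_0 (and hence M_{k+p} = M_k for all k). -/
open MeasureTheory

/-- The planar wedge (cross) product: `u ∧ v = uₓ v_y − u_y vₓ`. -/
def wedge (u v : ℝ × ℝ) : ℝ := u.1 * v.2 - u.2 * v.1

/-- The angle in `[0, π)` of the line directed by the nonzero vector `u`. -/
noncomputable def lineAngle (u : ℝ × ℝ) : ℝ :=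
  let θ := Complex.arg ⟨u.1, u.2⟩
  if θ < 0 then θ + Real.pi else if θ = Real.pi then 0 else θ

/-- A finite family of real numbers is commensurate if they are all nonzero and all
pairwise ratios are rational. -/
def Commensurate {m : ℕ} (α : Fin m → ℝ) : Prop :=
  (∀ i, α i ≠ 0) ∧ ∀ i j, ∃ q : ℚ, α i = (q : ℝ) * α j

/-- A convex polygon in the plane with `n ≥ 3` vertices listed in counterclockwise order,
no three vertices collinear, no two edges parallel, together with the data describing
the slope ordering of its edges and, for each edge, the (unique) vertex farthest from
its supporting line.  Edge `i` (in slope order) is the segment from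
`vertex (σ i)` to `vertex (σ i + 1)`. -/
structure ConvexPolygonSpokes (n : ℕ) [NeZero n] where
  three_le : 3 ≤ n
  vertex : Fin n → ℝ × ℝ
  /-- every vertex lies strictly to the left of each directed edge: this encodes
  convexity, the counterclockwise orientation, and that no three vertices are collinear -/
  convex_ccw : ∀ i j : Fin n, j ≠ i → j ≠ i + 1 →
    0 < wedge (vertex (i + 1) - vertex i) (vertex j - vertex i)
  /-- no two edges are parallel -/
  no_parallel : ∀ i j : Fin n, i ≠ j →
    wedge (vertex (i + 1) - vertex i) (vertex (j + 1) - vertex j) ≠ 0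
  /-- the permutation re-indexing the edges by slope -/
  σ : Equiv.Perm (Fin n)
  /-- the angles in `[0, π)` of the supporting lines are strictly increasing in slope order -/
  slope_sorted : StrictMono fun i : Fin n => lineAngle (vertex (σ i + 1) - vertex (σ i))
  /-- index of the vertex of the polygon farthest (in Euclidean distance, equivalently in
  the absolute wedge with the edge direction) from the supporting line of the `i`-th edge -/
  wIdx : Fin n → Fin n
  wIdx_farthest : ∀ i j : Fin n, j ≠ wIdx i →
    |wedge (vertex (σ i + 1) - vertex (σ i)) (vertex j - vertex (σ i))| <
    |wedge (vertex (σ i + 1) - vertex (σ i)) (vertex (wIdx i) - vertex (σ i))|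

namespace ConvexPolygonSpokes

variable {n : ℕ} [NeZero n] (P : ConvexPolygonSpokes n)

/-- Direction vector of the `i`-th edge (in slope order). -/
def dir (i : Fin n) : ℝ × ℝ := P.vertex (P.σ i + 1) - P.vertex (P.σ i)

/-- `v i`: the second endpoint of the `i`-th edge in the counterclockwise traversal. -/
def v (i : Fin n) : ℝ × ℝ := P.vertex (P.σ i + 1)

/-- `w i`: the vertex farthest from the supporting line of the `i`-th edge. -/
def w (i : Fin n) : ℝ × ℝ := P.vertex (P.wIdx i)

/-- The spoke vector of the `i`-th edge: `a i = 2 (w i − v i)`. -/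
def a (i : Fin n) : ℝ × ℝ := (2 : ℝ) • (P.w i - P.v i)

/-- `d i`: the unique vector parallel to edge `i` such that `a i + d i` is parallel to
edge `i+1` (written explicitly; it exists and is unique since edges `i` and `i+1`
are not parallel). -/
noncomputable def d (i : Fin n) : ℝ × ℝ :=
  (-(wedge (P.dir (i + 1)) (P.a i)) / wedge (P.dir (i + 1)) (P.dir i)) • P.dir i

/-- The polygon (as a convex body): the convex hull of its vertices. -/
def polygon : Set (ℝ × ℝ) := convexHull ℝ (Set.range P.vertex)

/-- The closed strip bounded by the supporting line of the `i`-th edge and the parallel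
line through the vertex `w i` farthest from it. -/
def strip (i : Fin n) : Set (ℝ × ℝ) :=
  {p | 0 ≤ wedge (P.dir i) (p - P.vertex (P.σ i)) ∧
    wedge (P.dir i) (p - P.vertex (P.σ i)) ≤ wedge (P.dir i) (P.w i - P.vertex (P.σ i))}

/-- `OBStep M N` holds when the outer billiard map is defined at `M ∈ ℝ² ∖ P` — i.e. there
is a vertex `A` of `P` with `(A − M) ∧ (p − M) ≤ 0` for all `p ∈ P`, with equality only
for `p = A` — and `N = 2A − M` is the image of `M`. -/
def OBStep (M N : ℝ × ℝ) : Prop :=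
  M ∉ P.polygon ∧ ∃ k : Fin n,
    (∀ p ∈ P.polygon, wedge (P.vertex k - M) (p - M) ≤ 0) ∧
    (∀ p ∈ P.polygon, wedge (P.vertex k - M) (p - M) = 0 → p = P.vertex k) ∧
    N = (2 : ℝ) • P.vertex k - M

/-- A forward orbit of the outer billiard map. -/
def IsOrbit (M : ℕ → ℝ × ℝ) : Prop := ∀ k : ℕ, P.OBStep (M k) (M (k + 1))

/-- `P` is quasi-rational: the numbers `|a i ∧ a (i+1)|` are nonzero and commensurate. -/
def QuasiRational : Prop :=
  Commensurate fun i : Fin n => |wedge (P.a i) (P.a (i + 1))|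

/-- `P` is rational: all its vertices lie on a lattice of `ℝ²`. -/
def Rational : Prop :=
  ∃ b₁ b₂ : ℝ × ℝ, LinearIndependent ℝ ![b₁, b₂] ∧
    ∀ k : Fin n, ∃ m l : ℤ, P.vertex k = (m : ℝ) • b₁ + (l : ℝ) • b₂

/-- The system `d₁ + a₁ + t₂ a₂ + ⋯ + t_{i−1} a_{i−1} = t_i d_i` (for `i = 2, …, n`),
`d₁ + a₁ + t₂ a₂ + ⋯ + t_n a_n = −d₁` has a rational solution `(t₂, …, t_n)`
(indices shifted down by one: paper index `i` is `Fin`-index `i − 1`). -/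
def SystemHasRatSolution : Prop :=
  ∃ t : Fin n → ℚ,
    (∀ i : Fin n, 0 < i →
      P.d 0 + P.a 0 + ∑ j ∈ Finset.Ioo 0 i, (t j : ℝ) • P.a j = (t i : ℝ) • P.d i) ∧
    P.d 0 + P.a 0 + ∑ j ∈ Finset.Ioi (0 : Fin n), (t j : ℝ) • P.a j = - P.d 0

end ConvexPolygonSpokes

/-! At a large and sufficiently divisible level `h`, the sides of the polygon
`{s | ∀ e ∈ V - V, s ∧ e ≤ h}` subdivide exactly into segments `[s, s + 2 (A' - A)]`, where `A` and
`A'` are the vertices of `V` on its two supporting lines parallel to `s`. On the bead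
`s + convexHull ℝ V` the billiard map reflects about `A` and then about `A'`, so its square
translates one bead of this necklace onto the next. An orbit starting inside the necklace, as every
orbit does for large `h`, cannot jump over it: it stays inside or lands in a bead and is then
carried along the necklace forever. Hence every orbit is bounded. As the square of the map moves
points by lattice vectors, the orbit is finite, and it is periodic because the map is injective. -/

namespace OuterBilliard

open AddSubgroup
open scoped Pointwise

section Wedge

lemma wedge_swap (u w : ℝ × ℝ) : wedge u w = -wedge w u := by
  simp only [wedge]; ring

lemma wedge_self (u : ℝ × ℝ) : wedge u u = 0 := by
  simp only [wedge]; ring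

lemma wedge_add_left (u u' w : ℝ × ℝ) : wedge (u + u') w = wedge u w + wedge u' w := by
  simp only [wedge, Prod.fst_add, Prod.snd_add]; ring

lemma wedge_smul_left (t : ℝ) (u w : ℝ × ℝ) : wedge (t • u) w = t * wedge u w := by
  simp only [wedge, Prod.smul_fst, Prod.smul_snd, smul_eq_mul]; ring

lemma wedge_sub_left (u u' w : ℝ × ℝ) : wedge (u - u') w = wedge u w - wedge u' w := by
  simp only [wedge, Prod.fst_sub, Prod.snd_sub]; ring

lemma wedge_sub_right (u w w' : ℝ × ℝ) : wedge u (w - w') = wedge u w - wedge u w' := by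
  simp only [wedge, Prod.fst_sub, Prod.snd_sub]; ring

lemma wedge_neg_right (u w : ℝ × ℝ) : wedge u (-w) = -wedge u w := by
  simp only [wedge, Prod.fst_neg, Prod.snd_neg]; ring

lemma wedge_sub_sub_rotate (p q x : ℝ × ℝ) :
    wedge (p - x) (q - x) = wedge (x - q) (p - q) := by
  simp only [wedge, Prod.fst_sub, Prod.snd_sub]; ring

lemma wedge_sub_sub_eq (p q x : ℝ × ℝ) :
    wedge (p - x) (q - x) = wedge p q - wedge x (q - p) := by
  simp only [wedge, Prod.fst_sub, Prod.snd_sub]; ring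

lemma wedge_smul_eq (u w x : ℝ × ℝ) : wedge u w • x = wedge x w • u - wedge x u • w := by
  ext <;> simp only [wedge, Prod.smul_fst, Prod.smul_snd, Prod.fst_sub, Prod.snd_sub,
    smul_eq_mul] <;> ring

lemma wedge_mul_wedge (s p c a : ℝ × ℝ) :
    wedge s p * wedge c a = wedge s a * wedge c p + wedge s c * wedge p a := by
  simp only [wedge]; ring

lemma isLinearMap_wedge_left (w : ℝ × ℝ) : IsLinearMap ℝ fun u => wedge u w :=
  ⟨fun u u' => wedge_add_left u u' w, fun t u => wedge_smul_left t u w⟩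

lemma injective_wedge_pair {e f : ℝ × ℝ} (hef : wedge e f ≠ 0) :
    Function.Injective fun x => (wedge x e, wedge x f) := by
  intro x y hxy
  obtain ⟨he, hf⟩ := Prod.mk.inj hxy
  refine smul_right_injective _ hef ?_
  simp only [wedge_smul_eq e f, he, hf]

lemma wedge_add_nonneg_of_mem_convexHull {V : Set (ℝ × ℝ)} {p u c : ℝ × ℝ}
    (hp : p ∈ convexHull ℝ V) (hV : ∀ q ∈ V, 0 ≤ wedge (q + u) c) : 0 ≤ wedge (p + u) c := by
  have hsub : V ⊆ {q | -wedge u c ≤ wedge q c} := fun q hq => by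
    have := hV q hq
    rw [wedge_add_left] at this
    exact neg_le_iff_add_nonneg.2 this
  rw [wedge_add_left]
  exact neg_le_iff_add_nonneg.1
    (convexHull_min hsub (convex_halfSpace_ge (isLinearMap_wedge_left c) _) hp)

end Wedge

lemma add_smul_sub_add_smul_sub_mem {E : Type*} [AddCommGroup E] [Module ℝ E] {K : Set E}
    (hK : Convex ℝ K) {x y z : E} (hx : x ∈ K) (hy : y ∈ K) (hz : z ∈ K) {s t : ℝ}
    (hs : 0 ≤ s) (ht : 0 ≤ t) (hst : s + t ≤ 1) : x + s • (y - x) + t • (z - x) ∈ K := by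
  have hmem := hK.sum_mem (t := Finset.univ) (w := ![1 - s - t, s, t]) (z := ![x, y, z])
    (by simpa [Fin.forall_fin_succ, hs, ht] using by linarith)
    (by simp only [Fin.sum_univ_three, Matrix.cons_val]; ring)
    (by simp [Fin.forall_fin_succ, hx, hy, hz])
  convert hmem using 1
  simp only [Fin.sum_univ_three, Matrix.cons_val]
  module

section Multiples

lemma le_of_lt_add_of_mem_zmultiples {D x y : ℝ} (hD : 0 < D) (hx : x ∈ zmultiples D)
    (hy : y ∈ zmultiples D) (h : x < y + D) : x ≤ y := by
  obtain ⟨k, rfl⟩ := mem_zmultiples_iff.1 hx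
  obtain ⟨l, rfl⟩ := mem_zmultiples_iff.1 hy
  rw [← add_one_zsmul, zsmul_lt_zsmul_iff_left hD, Int.lt_add_one_iff] at h
  exact zsmul_le_zsmul_left hD.le h

lemma exists_common_multiple {S : Set ℝ} (hS : S.Finite) {D : ℝ}
    (hSD : S ⊆ zmultiples D) :
    ∃ K : ℤ, K ≠ 0 ∧ ∀ w ∈ S, w ≠ 0 → ∃ z : ℤ, K * D = z * w := by
  have hmul : ∀ w ∈ S, ∃ k : ℤ, k • D = w := fun w hw => mem_zmultiples_iff.1 (hSD hw)
  choose! k hk using hmul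
  have hk0 : ∀ w ∈ S, w ≠ 0 → k w ≠ 0 := fun w hw hw0 hkw =>
    hw0 (by rw [← hk w hw, hkw, zero_smul])
  refine ⟨∏ w ∈ hS.toFinset with w ≠ 0, k w, Finset.prod_ne_zero_iff.2 ?_, ?_⟩
  · simpa using hk0
  · intro w hw hw0
    obtain ⟨z, hz⟩ := Finset.dvd_prod_of_mem k
      (show w ∈ hS.toFinset.filter (· ≠ 0) by simp [hw, hw0])
    refine ⟨z, ?_⟩
    have hkw := hk w hw
    rw [zsmul_eq_mul] at hkw
    rw [hz, Int.cast_mul]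
    linear_combination (z : ℝ) * hkw

lemma finite_range_of_sub_mem_zmultiples {D : ℝ} {f : ℕ → ℝ}
    (hD : ∀ k, f (k + 1) - f k ∈ zmultiples D) (hb : Bornology.IsBounded (Set.range f)) :
    (Set.range f).Finite := by
  have hmem : ∀ k, f k - f 0 ∈ zmultiples D := fun k => by
    induction k with
    | zero => simp
    | succ k ih => simpa using add_mem (hD k) ih
  have hfin : (((· - f 0) '' Set.range f) ∩ zmultiples D).Finite :=
    Metric.finite_isBounded_inter_isClosed
      ⟨inferInstanceAs (DiscreteTopology (zmultiples D))⟩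
      (by simpa only [Set.sub_singleton] using hb.sub (Bornology.isBounded_singleton (x := f 0)))
      AddSubgroup.isClosed_of_discrete
  refine Set.Finite.of_finite_image (f := (· - f 0)) (hfin.subset ?_) sub_left_injective.injOn
  rintro _ ⟨_, ⟨k, rfl⟩, rfl⟩
  exact ⟨⟨f k, ⟨k, rfl⟩, rfl⟩, hmem k⟩

end Multiples

lemma exists_period_of_biUnique {α : Type*} {r : α → α → Prop} (hr : Relator.BiUnique r)
    {M : ℕ → α} (hM : ∀ k, r (M k) (M (k + 1))) {m n : ℕ} (hmn : m < n) (h : M m = M n) :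
    ∃ p : ℕ, 1 ≤ p ∧ M p = M 0 ∧ ∀ k : ℕ, M (k + p) = M k := by
  have back : ∀ m p, M (m + p) = M m → M p = M 0 := fun m p hmp => by
    induction m with
    | zero => simpa using hmp
    | succ m ih =>
      rw [Nat.add_right_comm] at hmp
      exact ih (hr.left (hM (m + p)) (hmp ▸ hM m))
  have hp : M (n - m) = M 0 := back m (n - m) (by rw [Nat.add_sub_cancel' hmn.le, h])
  refine ⟨n - m, Nat.sub_pos_of_lt hmn, hp, fun k => ?_⟩
  induction k with
  | zero => rw [zero_add, hp]
  | succ k ih =>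
    rw [Nat.add_right_comm]
    exact hr.right (ih ▸ hM (k + (n - m))) (hM k)

/-- The outer billiard map of a set `V` of vertices, as a relation: `y` is the reflection of `x`
about the vertex `A` on the tangent line from `x` having `V` on its right. The tangency condition
is imposed on the vertices only, and `V` need not be in convex position. -/
def TangentStep (V : Set (ℝ × ℝ)) (x y : ℝ × ℝ) : Prop :=
  ∃ A ∈ V, (∀ q ∈ V, wedge (A - x) (q - x) ≤ 0) ∧
    (∀ q ∈ V, wedge (A - x) (q - x) = 0 → q = A) ∧ y = (2 : ℝ) • A - x

lemma TangentStep.eq_of_forall_nonneg {V : Set (ℝ × ℝ)} {x y A : ℝ × ℝ}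
    (hxy : TangentStep V x y) (hA : A ∈ V) (hV : ∀ q ∈ V, 0 ≤ wedge (x - A) (q - A)) :
    y = (2 : ℝ) • A - x := by
  obtain ⟨A', hA', hle, huniq, rfl⟩ := hxy
  rw [huniq A hA ((hle A hA).antisymm ((hV A' hA').trans_eq (wedge_sub_sub_rotate _ _ _).symm))]

lemma biUnique_tangentStep (V : Set (ℝ × ℝ)) : Relator.BiUnique (TangentStep V) := by
  constructor
  · rintro x x' y ⟨A, hA, hle, huniq, hy⟩ ⟨A', hA', hle', -, hy'⟩
    have hx : x = (2 : ℝ) • A - y := by rw [hy, sub_sub_cancel]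
    have hx' : x' = (2 : ℝ) • A' - y := by rw [hy', sub_sub_cancel]
    have hneg : wedge (A - x) (A' - x) = -wedge (A' - x') (A - x') := by
      rw [hx, hx']
      simp only [wedge, Prod.fst_sub, Prod.snd_sub, Prod.smul_fst, Prod.smul_snd, smul_eq_mul]
      ring
    have hAA' : A' = A := huniq A' hA' (by linarith [hle A' hA', hle' A hA])
    rw [hx, hx', hAA']
  · rintro x y y' ⟨A, hA, hle, -, rfl⟩ hy'
    refine (hy'.eq_of_forall_nonneg hA fun q hq => ?_).symm
    rw [← wedge_sub_sub_rotate, wedge_swap]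
    exact neg_nonneg.2 (hle q hq)

/-- The wedges of all pairs of difference vectors of `V`: the values that are integral multiples
of a common unit when `V` lies in a lattice. -/
def wedgeSet (V : Set (ℝ × ℝ)) : Set ℝ := Set.image2 wedge (V - V) (V - V)

lemma wedge_mem_wedgeSet {V : Set (ℝ × ℝ)} {e f : ℝ × ℝ} (he : e ∈ V - V) (hf : f ∈ V - V) :
    wedge e f ∈ wedgeSet V :=
  Set.mem_image2_of_mem he hf

lemma finite_wedgeSet {V : Set (ℝ × ℝ)} (hV : V.Finite) : (wedgeSet V).Finite :=
  (hV.sub hV).image2 wedge (hV.sub hV)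

section Level

/-- A level `h` at which the necklace of `V` decomposes exactly into beads: the wedges of
differences of `V` are multiples of the unit `D` bounded by `B`, the level is large with respect to
`D` and `B`, and it is divisible enough that the vertices of the necklace lying on a common side
differ by an even multiple of the corresponding difference vector. -/
structure IsNecklaceLevel (V : Set (ℝ × ℝ)) (D B h : ℝ) : Prop where
  pos : 0 < D
  le_bound : D ≤ B
  subset_zmultiples : wedgeSet V ⊆ zmultiples D
  abs_le_bound : ∀ w ∈ wedgeSet V, |w| ≤ B
  three_mul_sq_lt : 3 * B ^ 2 < h * D
  dvd : ∀ p ∈ wedgeSet V, ∀ q ∈ wedgeSet V, p ≠ 0 → q ≠ 0 → ∃ z : ℤ, h * D = 2 * z * (p * q)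

lemma exists_isNecklaceLevel {V : Set (ℝ × ℝ)} (hV : V.Finite) {D : ℝ} (hD : 0 < D)
    (hVD : wedgeSet V ⊆ zmultiples D) (R : ℝ) :
    ∃ B h, R ≤ h ∧ IsNecklaceLevel V D B h := by
  obtain ⟨C, hC⟩ := (finite_wedgeSet hV).isBounded.exists_norm_le
  obtain ⟨K, hK, hKdvd⟩ := exists_common_multiple (finite_wedgeSet hV) hVD
  have hKD : 0 < 2 * (K : ℝ) ^ 2 * D := by positivity
  have htends : Filter.Tendsto (fun N : ℕ => 2 * (K : ℝ) ^ 2 * D * N) Filter.atTop Filter.atTop :=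
    tendsto_natCast_atTop_atTop.const_mul_atTop hKD
  obtain ⟨N, hNR, hNB⟩ := ((htends.eventually_ge_atTop R).and
    (htends.eventually_gt_atTop (3 * max C D ^ 2 / D))).exists
  refine ⟨max C D, _, hNR, hD, le_max_right _ _, hVD,
    fun w hw => (hC w hw).trans (le_max_left _ _), (div_lt_iff₀ hD).1 hNB, ?_⟩
  intro p hp q hq hp0 hq0
  obtain ⟨y, hy⟩ := hKdvd p hp hp0
  obtain ⟨z, hz⟩ := hKdvd q hq hq0
  refine ⟨N * y * z, ?_⟩
  push_cast
  linear_combination 2 * N * (K * D) * hy + 2 * N * y * p * hz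

namespace IsNecklaceLevel

variable {V : Set (ℝ × ℝ)} {D B h : ℝ}

lemma three_mul_lt (L : IsNecklaceLevel V D B h) : 3 * B < h := by
  have hB : 0 < B := L.pos.trans_le L.le_bound
  refine lt_of_mul_lt_mul_right ?_ L.pos.le
  nlinarith [L.three_mul_sq_lt, L.le_bound]

lemma pos_level (L : IsNecklaceLevel V D B h) : 0 < h := by
  linarith [L.pos, L.le_bound, L.three_mul_lt]

-- At a vertex `s` of the necklace the Plücker relation reduces to
-- `(s ∧ f) (c ∧ e) = h (c ∧ f)`, and `h` is divisible by `2 (c ∧ e) (f ∧ e)`.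
lemma exists_even_of_wedge_eq_zero (L : IsNecklaceLevel V D B h) {s c e f : ℝ × ℝ}
    (hc : c ∈ V - V) (he : e ∈ V - V) (hf : f ∈ V - V) (hc0 : c ≠ 0) (hsc : wedge s c = 0)
    (hse : wedge s e = h) (hfe : wedge f e ≠ 0) :
    ∃ z : ℤ, wedge s f = 2 * z * wedge f e := by
  have hce : wedge c e ≠ 0 := fun hce => by
    have := wedge_smul_eq s e c
    rw [hse, hce, wedge_swap c s, hsc, neg_zero, zero_smul, zero_smul, sub_zero] at this
    exact hc0 ((smul_eq_zero.1 this).resolve_left L.pos_level.ne')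
  have plucker := wedge_mul_wedge s f c e
  rw [hsc, zero_mul, add_zero, hse] at plucker
  obtain ⟨k, hk⟩ := mem_zmultiples_iff.1 (L.subset_zmultiples (wedge_mem_wedgeSet hc hf))
  obtain ⟨z, hz⟩ := L.dvd _ (wedge_mem_wedgeSet hc he) _ (wedge_mem_wedgeSet hf he) hce hfe
  refine ⟨k * z, mul_right_cancel₀ hce ?_⟩
  rw [plucker, ← hk, zsmul_eq_mul]
  push_cast
  linear_combination (k : ℝ) * hz

end IsNecklaceLevel

end Level

/-- The translation vector `s` is the offset of a bead of the necklace of level `h`: it lies on the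
boundary of the polygon `{s | ∀ e ∈ V - V, s ∧ e ≤ h}`, and it differs from each vertex of a side
containing it by an even multiple of the difference vector `e` spanning that side. The vertices of
the side on the line `s ∧ e = h` are among the points `(h / (f ∧ e)) • f` with `f ∈ V - V`, whence
the form of `even`. -/
structure IsBeadOffset (V : Set (ℝ × ℝ)) (h : ℝ) (s : ℝ × ℝ) : Prop where
  le : ∀ e ∈ V - V, wedge s e ≤ h
  exists_eq : ∃ e ∈ V - V, wedge s e = h
  even : ∀ e ∈ V - V, wedge s e = h → ∀ f ∈ V - V, wedge f e ≠ 0 →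
    ∃ z : ℤ, wedge s f = 2 * z * wedge f e

section Entrance

/-- The region enclosed by the necklace of level `h`. -/
def necklaceInterior (V : Set (ℝ × ℝ)) (h : ℝ) : Set (ℝ × ℝ) :=
  {x | ∀ p ∈ V, ∀ q ∈ V, wedge (p - x) (q - x) ≤ h}

variable {V : Set (ℝ × ℝ)} {D B h : ℝ}

-- The Plücker relation `(y ∧ u) (c ∧ b) = (y ∧ b) (c ∧ u) + (y ∧ c) (u ∧ b)` locates `c ∧ u` up to
-- an error smaller than the unit `D`: `y ∧ b` is close to `h`, and the last term is at most
-- `B ^ 2`.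
lemma IsNecklaceLevel.wedge_mem_Icc (L : IsNecklaceLevel V D B h) {y b c u : ℝ × ℝ}
    (hb : b ∈ V - V) (hc : c ∈ V - V) (hu : u ∈ V - V) (hyu : wedge y u ∈ Set.Icc 0 h)
    (hyc : wedge y c ∈ Set.Icc 0 (wedge c b)) (hcb : 0 < wedge c b) (hyb : h - B ≤ wedge y b) :
    wedge c u ∈ Set.Icc 0 (wedge c b) := by
  have plucker := wedge_mul_wedge y u c b
  have hcbB := (le_abs_self _).trans (L.abs_le_bound _ (wedge_mem_wedgeSet hc hb))
  have hub := L.abs_le_bound _ (wedge_mem_wedgeSet hu hb)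
  have hcuD := L.subset_zmultiples (wedge_mem_wedgeSet hc hu)
  have hcbD := L.subset_zmultiples (wedge_mem_wedgeSet hc hb)
  have herr : |wedge y c * wedge u b| ≤ B ^ 2 := by
    rw [abs_mul, abs_of_nonneg hyc.1, sq]
    exact mul_le_mul (hyc.2.trans hcbB) hub (abs_nonneg _) (hcb.le.trans hcbB)
  obtain ⟨herr₁, herr₂⟩ := abs_le.1 herr
  have hB : 0 ≤ B := hcb.le.trans hcbB
  have hyb0 : 0 ≤ wedge y b := by linarith [L.three_mul_lt]
  have hunit : 2 * B ^ 2 < wedge y b * D := by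
    linarith [mul_le_mul_of_nonneg_right hyb L.pos.le, mul_le_mul_of_nonneg_left L.le_bound hB,
      L.three_mul_sq_lt]
  constructor
  · refine le_of_lt_add_of_mem_zmultiples L.pos (zero_mem _) hcuD ?_
    by_contra! hcu
    linarith [mul_nonneg hyu.1 hcb.le, mul_le_mul_of_nonneg_left hcu hyb0]
  · refine le_of_lt_add_of_mem_zmultiples L.pos hcuD hcbD ?_
    by_contra! hcu
    linarith [mul_le_mul_of_nonneg_right hyu.2 hcb.le, mul_le_mul_of_nonneg_left hcu hyb0,
      mul_le_mul_of_nonneg_right hyb hcb.le, mul_le_mul_of_nonneg_left hcbB hB]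

lemma IsNecklaceLevel.isBeadOffset_corner (L : IsNecklaceLevel V D B h) {A A' c : ℝ × ℝ}
    (hA : A ∈ V) (hA' : A' ∈ V) (hc : c ∈ V - V) (hpos : 0 < wedge c (A' - A))
    (hV : ∀ q ∈ V, wedge c (q - A) ∈ Set.Icc 0 (wedge c (A' - A))) :
    IsBeadOffset V h (-(h / wedge c (A' - A)) • c) := by
  have hc0 : c ≠ 0 := by
    rintro rfl
    simp [wedge] at hpos
  refine ⟨?_, ⟨A - A', Set.sub_mem_sub hA hA', ?_⟩, fun e he hse f hf hfe =>
    L.exists_even_of_wedge_eq_zero hc he hf hc0 ?_ hse hfe⟩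
  · rintro _ ⟨q, hq, q', hq', rfl⟩
    change wedge _ (q - q') ≤ h
    have hqq' : wedge c (q' - q) ≤ wedge c (A' - A) := by
      rw [← sub_sub_sub_cancel_right q' q A, wedge_sub_right]
      linarith [(hV q hq).1, (hV q' hq').2]
    rw [wedge_smul_left, neg_mul, ← mul_neg, ← wedge_neg_right, neg_sub]
    calc h / wedge c (A' - A) * wedge c (q' - q)
        ≤ h / wedge c (A' - A) * wedge c (A' - A) :=
          mul_le_mul_of_nonneg_left hqq' (div_pos L.pos_level hpos).le
      _ = h := div_mul_cancel₀ h hpos.ne'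
  · rw [wedge_smul_left, neg_mul, ← mul_neg, ← wedge_neg_right, neg_sub]
    exact div_mul_cancel₀ h hpos.ne'
  · rw [wedge_smul_left, wedge_self, mul_zero]

lemma exists_mem_convexHull_add_corner {A m l y : ℝ × ℝ} (hA : A ∈ V) (hm : m ∈ V) (hl : l ∈ V)
    (hml : 0 < wedge (m - A) (l - A)) (hym : 0 ≤ wedge y (m - A)) (hyl : wedge y (l - A) ≤ h)
    (hle : h ≤ wedge y (l - A) - wedge y (m - A) + wedge (m - A) (l - A)) :
    ∃ p ∈ convexHull ℝ V, A - y = p + -(h / wedge (m - A) (l - A)) • (m - A) := by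
  set w := wedge (m - A) (l - A)
  have hy : y = (wedge y (l - A) / w) • (m - A) - (wedge y (m - A) / w) • (l - A) := by
    rw [div_eq_inv_mul, div_eq_inv_mul, mul_smul, mul_smul, ← smul_sub, ← wedge_smul_eq,
      inv_smul_smul₀ hml.ne']
  refine ⟨_, add_smul_sub_add_smul_sub_mem (convex_convexHull ℝ V) (subset_convexHull ℝ V hA)
    (subset_convexHull ℝ V hl) (subset_convexHull ℝ V hm) (div_nonneg hym hml.le)
    (div_nonneg (sub_nonneg.2 hyl) hml.le) ?_, ?_⟩
  · rw [← add_div, div_le_one hml]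
    linarith
  · generalize wedge y (l - A) = t, wedge y (m - A) = r at hy ⊢
    rw [hy]
    module

lemma exists_bead_of_leave (L : IsNecklaceLevel V D B h) {x z : ℝ × ℝ}
    (hx : x ∈ necklaceInterior V h) (hxz : TangentStep V x z) (hz : z ∉ necklaceInterior V h) :
    ∃ s, IsBeadOffset V h s ∧ ∃ p ∈ convexHull ℝ V, z = p + s := by
  obtain ⟨A, hA, hle, -, rfl⟩ := hxz
  simp only [necklaceInterior, Set.mem_ofPred_eq] at hz
  push Not at hz
  obtain ⟨m, hm, l, hl, hml⟩ := hz
  have hV : ∀ q ∈ V, wedge (x - A) (q - A) ∈ Set.Icc 0 h := fun q hq => by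
    rw [← wedge_sub_sub_rotate]
    refine ⟨?_, hx q hq A hA⟩
    rw [wedge_swap]
    exact neg_nonneg.2 (hle q hq)
  have hz_wedge : wedge (m - ((2 : ℝ) • A - x)) (l - ((2 : ℝ) • A - x)) =
      wedge (x - A) (l - A) - wedge (x - A) (m - A) + wedge (m - A) (l - A) := by
    simp only [wedge, Prod.fst_sub, Prod.snd_sub, Prod.smul_fst, Prod.smul_snd, smul_eq_mul]
    ring
  have hx_wedge : wedge (l - x) (m - x) =
      wedge (x - A) (l - A) - wedge (x - A) (m - A) - wedge (m - A) (l - A) := by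
    simp only [wedge, Prod.fst_sub, Prod.snd_sub]
    ring
  rw [hz_wedge] at hml
  have hpos : 0 < wedge (m - A) (l - A) := by linarith [hx l hl m hm]
  have hmA : m - A ∈ V - V := Set.sub_mem_sub hm hA
  have hlA : l - A ∈ V - V := Set.sub_mem_sub hl hA
  have hB := (le_abs_self _).trans (L.abs_le_bound _ (wedge_mem_wedgeSet hmA hlA))
  have hstrip : ∀ q ∈ V, wedge (m - A) (q - A) ∈ Set.Icc 0 (wedge (m - A) (l - A)) := fun q hq =>
    L.wedge_mem_Icc hlA hmA (Set.sub_mem_sub hq hA) (hV q hq)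
      ⟨(hV m hm).1, by linarith [(hV l hl).2]⟩ hpos (by linarith [(hV m hm).1])
  obtain ⟨p, hp, hpeq⟩ :=
    exists_mem_convexHull_add_corner hA hm hl hpos (hV m hm).1 (hV l hl).2 hml.le
  refine ⟨_, L.isBeadOffset_corner hA hl hmA hpos hstrip, p, hp, ?_⟩
  rw [← hpeq]
  module

end Entrance

section Motion

variable {V : Set (ℝ × ℝ)} {D B h : ℝ} {s A A' : ℝ × ℝ}

/-- The set `V` lies in the strip bounded by the lines parallel to `s` through `A` (on the right)
and through `A'` (on the left). For `A, A' ∈ V` these are the supporting lines of `V`. -/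
def IsSupportingPair (V : Set (ℝ × ℝ)) (s A A' : ℝ × ℝ) : Prop :=
  ∀ q ∈ V, 0 ≤ wedge s (q - A) ∧ 0 ≤ wedge s (A' - q)

lemma IsSupportingPair.eq_zero_of_eq (S : IsSupportingPair V s A A') {q q' : ℝ × ℝ} (hq : q ∈ V)
    (hq' : q' ∈ V) (h : wedge s (q' - q) = wedge s (A' - A)) :
    wedge s (q - A) = 0 ∧ wedge s (A' - q') = 0 := by
  have hq₁ := (S q hq).1
  have hq'₂ := (S q' hq').2
  simp only [wedge_sub_right] at h hq₁ hq'₂ ⊢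
  constructor <;> linarith

lemma IsSupportingPair.wedge_le (S : IsSupportingPair V s A A') {e : ℝ × ℝ} (he : e ∈ V - V) :
    wedge s e ≤ wedge s (A' - A) := by
  obtain ⟨q', hq', q, hq, rfl⟩ := he
  have hq₁ := (S q hq).1
  have hq'₂ := (S q' hq').2
  simp only [wedge_sub_right] at hq₁ hq'₂ ⊢
  linarith

/-- The segment from `s` to `s + 2 (A' - A)` lies on the side of the necklace of level `h` spanned
by `A' - A`. -/
structure IsNecklaceStep (V : Set (ℝ × ℝ)) (h : ℝ) (s A A' : ℝ × ℝ) : Prop where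
  left_mem : A ∈ V
  right_mem : A' ∈ V
  wedge_eq : wedge s (A' - A) = h
  supports : IsSupportingPair V s A A'
  supports_next : IsSupportingPair V (s + (2 : ℝ) • (A' - A)) A A'

lemma wedge_add_two_smul_left (s a c : ℝ × ℝ) :
    wedge (s + (2 : ℝ) • a) c = wedge s c - 2 * wedge c a := by
  rw [wedge_add_left, wedge_smul_left, wedge_swap a c]
  ring

lemma exists_isSupportingPair (hV : V.Finite) (hne : V.Nonempty) (s e : ℝ × ℝ) :
    ∃ A ∈ V, ∃ A' ∈ V, IsSupportingPair V s A A' ∧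
      (∀ q ∈ V, wedge s (q - A) = 0 → wedge (q - A) e ≤ 0) ∧
      ∀ q ∈ V, wedge s (A' - q) = 0 → wedge (A' - q) e ≤ 0 := by
  obtain ⟨A, hA, hmin⟩ := Set.exists_min_image V (fun q => toLex (wedge s q, -wedge q e)) hV hne
  obtain ⟨A', hA', hmin'⟩ := Set.exists_min_image V (fun q => toLex (-wedge s q, wedge q e)) hV hne
  simp only [Prod.Lex.toLex_le_toLex'] at hmin hmin'
  refine ⟨A, hA, A', hA', fun q hq => ?_, fun q hq hsq => ?_, fun q hq hsq => ?_⟩ <;>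
    simp only [wedge_sub_right, wedge_sub_left, sub_nonneg, sub_nonpos] at *
  · exact ⟨(hmin q hq).1, neg_le_neg_iff.1 (hmin' q hq).1⟩
  · exact neg_le_neg_iff.1 ((hmin q hq).2 (by linarith))
  · exact (hmin' q hq).2 (by linarith)

lemma IsBeadOffset.two_mul_wedge_le (hs : IsBeadOffset V h s) (hh : 0 < h) {a c e : ℝ × ℝ}
    (ha : a ∈ V - V) (hc : c ∈ V - V) (hsa : wedge s a = h) (hse : wedge s e = h)
    (hsc : 0 ≤ wedge s c) (htie : wedge s c = 0 → wedge c e ≤ 0) :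
    2 * wedge c a ≤ wedge s c := by
  rcases le_or_gt (wedge c a) 0 with hca | hca
  · linarith
  obtain ⟨z, hz⟩ := hs.even a ha hsa c hc hca.ne'
  have hz0 : 0 ≤ (z : ℝ) := by
    by_contra! hneg
    nlinarith
  have hz_ne : z ≠ 0 := by
    rintro rfl
    have hsc0 : wedge s c = 0 := by simpa using hz
    have plucker := wedge_mul_wedge s e c a
    rw [hsc0, zero_mul, add_zero, hsa, hse] at plucker
    linarith [mul_left_cancel₀ hh.ne' plucker, htie hsc0]
  have hz1 : (1 : ℝ) ≤ z := by
    exact_mod_cast (Int.cast_nonneg_iff.1 hz0).lt_of_ne' hz_ne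
  rw [hz]
  nlinarith

-- Ties between vertices on a supporting line are broken so that the bead offset `s + 2 (A' - A)`
-- does not overshoot the end of the side of the necklace.
lemma IsBeadOffset.exists_isNecklaceStep (hs : IsBeadOffset V h s) (hV : V.Finite) (hh : 0 < h) :
    ∃ A A', IsNecklaceStep V h s A A' := by
  obtain ⟨e, he, hse⟩ := hs.exists_eq
  obtain ⟨A, hA, A', hA', S, htie, htie'⟩ :=
    exists_isSupportingPair hV (Set.Nonempty.of_sub_left ⟨e, he⟩) s e
  have ha : A' - A ∈ V - V := Set.sub_mem_sub hA' hA
  have hsa : wedge s (A' - A) = h := (hs.le _ ha).antisymm (hse ▸ S.wedge_le he)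
  refine ⟨A, A', hA, hA', hsa, S, fun q hq => ?_⟩
  simp only [wedge_add_two_smul_left, sub_nonneg]
  exact ⟨hs.two_mul_wedge_le hh ha (Set.sub_mem_sub hq hA) hsa hse (S q hq).1 (htie q hq),
    hs.two_mul_wedge_le hh ha (Set.sub_mem_sub hA' hq) hsa hse (S q hq).2 (htie' q hq)⟩

lemma IsNecklaceStep.wedge_next_eq (N : IsNecklaceStep V h s A A') :
    wedge (s + (2 : ℝ) • (A' - A)) (A' - A) = h := by
  rw [wedge_add_two_smul_left, wedge_self, mul_zero, sub_zero, N.wedge_eq]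

lemma IsNecklaceStep.isBeadOffset_next (N : IsNecklaceStep V h s A A')
    (L : IsNecklaceLevel V D B h) (hs : IsBeadOffset V h s) :
    IsBeadOffset V h (s + (2 : ℝ) • (A' - A)) := by
  refine ⟨fun e he => N.wedge_next_eq ▸ N.supports_next.wedge_le he,
    ⟨_, Set.sub_mem_sub N.right_mem N.left_mem, N.wedge_next_eq⟩, ?_⟩
  rintro _ ⟨q', hq', q, hq, rfl⟩ hse f hf hfe
  obtain ⟨hqA, hq'A'⟩ := N.supports_next.eq_zero_of_eq hq hq' (hse.trans N.wedge_next_eq.symm)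
  by_cases hqA_ne : q - A ≠ 0
  · exact L.exists_even_of_wedge_eq_zero (Set.sub_mem_sub hq N.left_mem)
      (Set.sub_mem_sub hq' hq) hf hqA_ne hqA hse hfe
  by_cases hq'A'_ne : A' - q' ≠ 0
  · exact L.exists_even_of_wedge_eq_zero (Set.sub_mem_sub N.right_mem hq')
      (Set.sub_mem_sub hq' hq) hf hq'A'_ne hq'A' hse hfe
  obtain rfl := sub_eq_zero.1 (not_not.1 hqA_ne)
  obtain rfl := sub_eq_zero.1 (not_not.1 hq'A'_ne)
  obtain ⟨z, hz⟩ := hs.even _ (Set.sub_mem_sub hq' hq) N.wedge_eq f hf hfe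
  refine ⟨z - 1, ?_⟩
  rw [wedge_add_two_smul_left, hz]
  push_cast
  ring

-- The variables stand for wedges of vectors `s`, `p`, `c`, `a` with `s ∧ a = h`. The two
-- reflections of a bead use the inequality with opposite orientations of the plane.
lemma le_of_plucker {sp sc ca cp pa : ℝ} (hD : 0 < D) (hca : ca ∈ zmultiples D)
    (hcp : cp ∈ zmultiples D) (hcpB : cp ≤ B) (hpa : |pa| ≤ B) (hB : B ^ 2 < h * D)
    (hsp : 0 ≤ sp) (hsph : sp ≤ h) (hsc : 0 ≤ sc) (hcasc : 2 * ca ≤ sc)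
    (plucker : sp * ca = h * cp + sc * pa) : cp ≤ sc := by
  by_contra! hlt
  have hDcp : D ≤ cp := by
    by_contra! hcpD
    linarith [le_of_lt_add_of_mem_zmultiples hD hcp (zero_mem _) (by linarith)]
  have herr : |sc * pa| ≤ B ^ 2 := by
    rw [abs_mul, abs_of_nonneg hsc, sq]
    exact mul_le_mul (hlt.le.trans hcpB) hpa (abs_nonneg _) (by linarith)
  have herr' := neg_le_of_abs_le herr
  have hh : 0 ≤ h := hsp.trans hsph
  have hca0 : 0 < ca := by
    by_contra! hca0
    linarith [mul_nonpos_of_nonneg_of_nonpos hsp hca0, mul_le_mul_of_nonneg_left hDcp hh,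
      (sq_nonneg B).trans_lt hB]
  have hcpca : cp ≤ ca := by
    refine le_of_lt_add_of_mem_zmultiples hD hcp hca ?_
    by_contra! hge
    linarith [mul_le_mul_of_nonneg_right hsph hca0.le, mul_le_mul_of_nonneg_left hge hh]
  linarith

lemma IsNecklaceStep.wedge_nonneg (N : IsNecklaceStep V h s A A') (L : IsNecklaceLevel V D B h)
    {p : ℝ × ℝ} (hp : p ∈ convexHull ℝ V) {q : ℝ × ℝ} (hq : q ∈ V) :
    0 ≤ wedge (p + s - A) (q - A) := by
  rw [add_sub_assoc]
  refine wedge_add_nonneg_of_mem_convexHull hp fun p hpV => ?_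
  have ha := Set.sub_mem_sub N.right_mem N.left_mem
  have hc := Set.sub_mem_sub hq N.left_mem
  have hpA := Set.sub_mem_sub hpV N.left_mem
  have hsc := (N.supports_next q hq).1
  rw [wedge_add_two_smul_left, sub_nonneg] at hsc
  have hle : wedge (q - A) (p - A) ≤ wedge s (q - A) :=
    le_of_plucker L.pos (L.subset_zmultiples (wedge_mem_wedgeSet hc ha))
      (L.subset_zmultiples (wedge_mem_wedgeSet hc hpA))
      ((le_abs_self _).trans (L.abs_le_bound _ (wedge_mem_wedgeSet hc hpA)))
      (L.abs_le_bound _ (wedge_mem_wedgeSet hpA ha))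
      (by linarith [L.three_mul_sq_lt, sq_nonneg B]) (N.supports p hpV).1
      (N.wedge_eq ▸ N.supports.wedge_le hpA) (N.supports q hq).1 hsc
      (by rw [wedge_mul_wedge, N.wedge_eq])
  rw [← add_sub_assoc, add_sub_right_comm, wedge_add_left, wedge_swap (p - A)]
  linarith

lemma IsNecklaceStep.wedge_next_nonneg (N : IsNecklaceStep V h s A A')
    (L : IsNecklaceLevel V D B h) {p : ℝ × ℝ} (hp : p ∈ convexHull ℝ V) {q : ℝ × ℝ} (hq : q ∈ V) :
    0 ≤ wedge (p + (s + (2 : ℝ) • (A' - A)) - A') (A' - q) := by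
  rw [add_sub_assoc]
  refine wedge_add_nonneg_of_mem_convexHull hp fun p hpV => ?_
  have ha := Set.sub_mem_sub N.right_mem N.left_mem
  have hc := Set.sub_mem_sub N.right_mem hq
  have hpA := Set.sub_mem_sub N.right_mem hpV
  have hsc : 2 * wedge (A' - A) (A' - q) ≤ wedge (s + (2 : ℝ) • (A' - A)) (A' - q) := by
    rw [wedge_add_left, wedge_smul_left]
    linarith [(N.supports q hq).2]
  have hle : wedge (A' - p) (A' - q) ≤ wedge (s + (2 : ℝ) • (A' - A)) (A' - q) :=
    le_of_plucker L.pos (L.subset_zmultiples (wedge_mem_wedgeSet ha hc))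
      (L.subset_zmultiples (wedge_mem_wedgeSet hpA hc))
      ((le_abs_self _).trans (L.abs_le_bound _ (wedge_mem_wedgeSet hpA hc)))
      (L.abs_le_bound _ (wedge_mem_wedgeSet ha hpA))
      (by linarith [L.three_mul_sq_lt, sq_nonneg B]) (N.supports_next p hpV).2
      (N.wedge_next_eq ▸ N.supports_next.wedge_le hpA) (N.supports_next q hq).2 hsc ?_
  · rw [← add_sub_assoc, add_sub_right_comm, wedge_add_left, ← neg_sub A' p, wedge_swap,
      wedge_neg_right, neg_neg, wedge_swap (A' - q)]
    linarith
  · have plucker := wedge_mul_wedge (s + (2 : ℝ) • (A' - A)) (A' - p) (A' - q) (A' - A)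
    rw [N.wedge_next_eq, wedge_swap (A' - q), wedge_swap (A' - q) (A' - p),
      wedge_swap (A' - p) (A' - A)] at plucker
    linarith

lemma exists_bead_next (hV : V.Finite) (L : IsNecklaceLevel V D B h) (hs : IsBeadOffset V h s)
    {p y z : ℝ × ℝ} (hp : p ∈ convexHull ℝ V) (hy : TangentStep V (p + s) y)
    (hz : TangentStep V y z) : ∃ s', IsBeadOffset V h s' ∧ z = p + s' := by
  obtain ⟨A, A', N⟩ := hs.exists_isNecklaceStep hV L.pos_level
  obtain rfl := hy.eq_of_forall_nonneg N.left_mem fun q hq => N.wedge_nonneg L hp hq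
  refine ⟨_, N.isBeadOffset_next L hs, ?_⟩
  rw [hz.eq_of_forall_nonneg N.right_mem fun q hq => ?_]
  · module
  · refine (N.wedge_next_nonneg L hp hq).trans_eq ?_
    simp only [wedge, Prod.fst_sub, Prod.snd_sub, Prod.fst_add, Prod.snd_add, Prod.smul_fst,
      Prod.smul_snd, smul_eq_mul]
    ring

end Motion

section Orbit

variable {V : Set (ℝ × ℝ)} {D B h : ℝ} {M : ℕ → ℝ × ℝ}

lemma bddAbove_wedge_of_mem_necklaceInterior (hM : ∀ k, M k ∈ necklaceInterior V h) {e : ℝ × ℝ}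
    (he : e ∈ V - V) : BddAbove (Set.range fun k => wedge (M k) e) := by
  obtain ⟨p, hp, q, hq, rfl⟩ := he
  refine ⟨h - wedge p q, ?_⟩
  rintro _ ⟨k, rfl⟩
  have hk := hM k p hp q hq
  rw [wedge_sub_sub_eq, ← neg_sub p q, wedge_neg_right] at hk
  change wedge (M k) (p - q) ≤ _
  linarith

lemma exists_bead_add_two_mul (hV : V.Finite) (L : IsNecklaceLevel V D B h)
    (hM : ∀ k, TangentStep V (M k) (M (k + 1))) {m : ℕ} {s p : ℝ × ℝ} (hs : IsBeadOffset V h s)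
    (hp : p ∈ convexHull ℝ V) (hm : M m = p + s) (k : ℕ) :
    ∃ s', IsBeadOffset V h s' ∧ M (m + 2 * k) = p + s' := by
  induction k with
  | zero => exact ⟨s, hs, hm⟩
  | succ k ih =>
    obtain ⟨s', hs', hk⟩ := ih
    exact exists_bead_next hV L hs' hp (hk ▸ hM (m + 2 * k)) (hM (m + 2 * k + 1))

lemma exists_bddAbove_wedge (hV : V.Finite) (L : IsNecklaceLevel V D B h)
    (hM : ∀ k, TangentStep V (M k) (M (k + 1))) (h0 : M 0 ∈ necklaceInterior V h) :
    ∃ m, ∀ e ∈ V - V, BddAbove (Set.range fun k => wedge (M (m + 2 * k)) e) := by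
  by_cases hin : ∀ k, M k ∈ necklaceInterior V h
  · exact ⟨0, fun e he =>
      bddAbove_wedge_of_mem_necklaceInterior (fun k => hin (0 + 2 * k)) he⟩
  obtain ⟨m, hin_m, hout⟩ : ∃ m, M m ∈ necklaceInterior V h ∧ M (m + 1) ∉ necklaceInterior V h := by
    by_contra! hstep
    exact hin fun k => Nat.rec h0 (fun m => hstep m) k
  obtain ⟨s, hs, p, hp, hps⟩ := exists_bead_of_leave L hin_m (hM m) hout
  refine ⟨m + 1, fun e he => ⟨wedge p e + h, ?_⟩⟩
  rintro _ ⟨k, rfl⟩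
  obtain ⟨s', hs', hk⟩ := exists_bead_add_two_mul hV L hM hs hp hps k
  simp only [hk, wedge_add_left]
  linarith [hs'.le e he]

lemma wedge_sub_wedge_mem_zmultiples (hVD : wedgeSet V ⊆ zmultiples D) {x y z : ℝ × ℝ}
    (hxy : TangentStep V x y) (hyz : TangentStep V y z) {e : ℝ × ℝ} (he : e ∈ V - V) :
    wedge z e - wedge x e ∈ zmultiples D := by
  obtain ⟨A, hA, -, -, rfl⟩ := hxy
  obtain ⟨A', hA', -, -, rfl⟩ := hyz
  have heq : wedge ((2 : ℝ) • A' - ((2 : ℝ) • A - x)) e - wedge x e =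
      (2 : ℤ) • wedge (A' - A) e := by
    rw [zsmul_eq_mul, ← wedge_sub_left, Int.cast_ofNat, ← wedge_smul_left]
    congr 1
    module
  rw [heq]
  exact zsmul_mem (hVD (wedge_mem_wedgeSet (Set.sub_mem_sub hA' hA) he)) 2

lemma finite_range_wedge (hVD : wedgeSet V ⊆ zmultiples D)
    (hM : ∀ k, TangentStep V (M k) (M (k + 1))) {m : ℕ}
    (hb : ∀ e ∈ V - V, BddAbove (Set.range fun k => wedge (M (m + 2 * k)) e)) {e : ℝ × ℝ}
    (he : e ∈ V - V) : (Set.range fun k => wedge (M (m + 2 * k)) e).Finite := by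
  refine finite_range_of_sub_mem_zmultiples (fun k => wedge_sub_wedge_mem_zmultiples hVD
    (hM (m + 2 * k)) (hM (m + 2 * k + 1)) he) (isBounded_iff_bddBelow_bddAbove.2 ⟨?_, hb e he⟩)
  obtain ⟨p, hp, q, hq, rfl⟩ := he
  obtain ⟨C, hC⟩ := hb (q - p) (Set.sub_mem_sub hq hp)
  refine ⟨-C, ?_⟩
  rintro _ ⟨k, rfl⟩
  have hk : wedge (M (m + 2 * k)) (q - p) ≤ C := hC ⟨k, rfl⟩
  rw [← neg_sub p q, wedge_neg_right] at hk
  exact neg_le.1 hk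

end Orbit

lemma exists_forall_mem_necklaceInterior {V : Set (ℝ × ℝ)} (hV : V.Finite) (x : ℝ × ℝ) :
    ∃ R, ∀ h, R ≤ h → x ∈ necklaceInterior V h := by
  obtain ⟨R, hR⟩ := (hV.image2 (fun p q => wedge (p - x) (q - x)) hV).bddAbove
  exact ⟨R, fun h hh p hp q hq => (hR (Set.mem_image2_of_mem hp hq)).trans hh⟩

end OuterBilliard

open OuterBilliard in
theorem rational_orbit_periodic_general {V : Set (ℝ × ℝ)} (hV : V.Finite) {D : ℝ}
    (hVD : wedgeSet V ⊆ AddSubgroup.zmultiples D) (hne : ∃ w ∈ wedgeSet V, w ≠ 0)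
    {M : ℕ → ℝ × ℝ} (hM : ∀ k, TangentStep V (M k) (M (k + 1))) :
    ∃ p : ℕ, 1 ≤ p ∧ M p = M 0 ∧ ∀ k : ℕ, M (k + p) = M k := by
  obtain ⟨_, ⟨e, he, f, hf, rfl⟩, hef⟩ := hne
  have hD : D ≠ 0 := by
    rintro rfl
    exact hef (by simpa using hVD (wedge_mem_wedgeSet he hf))
  rw [← zmultiples_abs] at hVD
  obtain ⟨R, hR⟩ := exists_forall_mem_necklaceInterior hV (M 0)
  obtain ⟨B, h, hRh, L⟩ := exists_isNecklaceLevel hV (abs_pos.2 hD) hVD R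
  obtain ⟨m, hbdd⟩ := exists_bddAbove_wedge hV L hM (hR h hRh)
  have hfin : (Set.range fun k => M (m + 2 * k)).Finite := by
    refine (((finite_range_wedge hVD hM hbdd he).prod
      (finite_range_wedge hVD hM hbdd hf)).preimage (injective_wedge_pair hef).injOn).subset ?_
    rintro _ ⟨k, rfl⟩
    exact ⟨⟨k, rfl⟩, ⟨k, rfl⟩⟩
  obtain ⟨i, j, hij, hMij⟩ := hfin.exists_lt_map_eq_of_forall_mem Set.mem_range_self
  exact exists_period_of_biUnique (biUnique_tangentStep V) hM (by lia) hMij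

namespace ConvexPolygonSpokes

open OuterBilliard

variable {n : ℕ} [NeZero n] {P : ConvexPolygonSpokes n}

lemma OBStep.tangentStep {x y : ℝ × ℝ} (hxy : P.OBStep x y) :
    TangentStep (Set.range P.vertex) x y := by
  obtain ⟨-, k, hle, huniq, hy⟩ := hxy
  have hsub : Set.range P.vertex ⊆ P.polygon := subset_convexHull ℝ _
  exact ⟨P.vertex k, ⟨k, rfl⟩, fun q hq => hle q (hsub hq), fun q hq => huniq q (hsub hq), hy⟩

lemma Rational.exists_wedgeSet_subset_zmultiples (hP : P.Rational) :
    ∃ D : ℝ, wedgeSet (Set.range P.vertex) ⊆ AddSubgroup.zmultiples D := by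
  obtain ⟨b₁, b₂, -, hlattice⟩ := hP
  choose m l hml using hlattice
  refine ⟨wedge b₁ b₂, ?_⟩
  rintro _ ⟨_, ⟨_, ⟨i, rfl⟩, _, ⟨i', rfl⟩, rfl⟩, _, ⟨_, ⟨j, rfl⟩, _, ⟨j', rfl⟩, rfl⟩, rfl⟩
  refine AddSubgroup.mem_zmultiples_iff.2
    ⟨(m i - m i') * (l j - l j') - (l i - l i') * (m j - m j'), ?_⟩
  simp only [hml, wedge, Prod.fst_sub, Prod.snd_sub, Prod.fst_add, Prod.snd_add, Prod.smul_fst,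
    Prod.smul_snd, smul_eq_mul, zsmul_eq_mul]
  push_cast
  ring

variable (P) in
lemma exists_mem_wedgeSet_ne_zero : ∃ w ∈ wedgeSet (Set.range P.vertex), w ≠ 0 := by
  obtain ⟨j, -, hj⟩ := Finset.exists_mem_notMem_of_card_lt_card
    (s := ({0, 0 + 1} : Finset (Fin n))) (t := Finset.univ)
    (Finset.card_le_two.trans_lt (by simpa [Nat.lt_iff_add_one_le] using P.three_le))
  simp only [Finset.mem_insert, Finset.mem_singleton, not_or] at hj
  exact ⟨_, wedge_mem_wedgeSet (Set.sub_mem_sub ⟨_, rfl⟩ ⟨_, rfl⟩)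
    (Set.sub_mem_sub ⟨_, rfl⟩ ⟨_, rfl⟩), (P.convex_ccw 0 j hj.1 hj.2).ne'⟩

end ConvexPolygonSpokes

/-- If `P` is a rational convex polygon without parallel edges, then every
forward orbit of the outer billiard map about `P` is periodic. -/
theorem rational_orbit_periodic {n : ℕ} [NeZero n] (P : ConvexPolygonSpokes n)
    (hrat : P.Rational) (M : ℕ → ℝ × ℝ) (hM : P.IsOrbit M) :
    ∃ p : ℕ, 1 ≤ p ∧ M p = M 0 ∧ ∀ k : ℕ, M (k + p) = M k := by
  obtain ⟨D, hD⟩ := hrat.exists_wedgeSet_subset_zmultiples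
  exact rational_orbit_periodic_general (Set.finite_range P.vertex) hD
    P.exists_mem_wedgeSet_ne_zero fun k => (hM k).tangentStep
end

section
/- For every i, the intersection Σ_i ∩ Σ_{i+1} of two consecutive strips is a (nondegenerate) parallelogram, one of whose diagonals is a translate of the segment from v_i to w_i and one of whose sides is a translate of d_i/2, and its Lebesgue area equals |a_i ∧ d_i| / 4. -/
open MeasureTheory

/-!
The diagonal of the parallelogram is the segment from `v i` to `w i` itself, because both strips
are the regions between the two parallels through `v i` and `w i`. For `strip i` this is the
definition. For `strip (i + 1)` it says that `v i` and `w i` lie on its two boundary lines, i.e.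
that they are the extrema over the polygon of the linear functional `wedge (dir (i + 1))`: since no
slope lies between two consecutive ones, each edge of the polygon that makes `wedge (dir i)`
increase makes `± wedge (dir (i + 1))` nondecreasing, with one sign for all edges. Hence the edges
adjacent to `v i` and to `w i` make these vertices local extrema of the second functional, and local
extrema on a convex polygon are global.

Decomposing `w i - v i` along the two edge directions gives the sides `-d i / 2` and
`(a i + d i) / 2`, whose wedge product is `wedge (a i) (d i) / 4`.
-/

section Wedge

variable (u v w : ℝ × ℝ) (c : ℝ)

@[simp] lemma wedge_self : wedge u u = 0 := by
  simp only [wedge]; ring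

lemma wedge_swap : wedge v u = -wedge u v := by
  simp only [wedge]; ring

lemma wedge_add_left : wedge (u + v) w = wedge u w + wedge v w := by
  simp only [wedge, Prod.fst_add, Prod.snd_add]; ring

lemma wedge_add_right : wedge u (v + w) = wedge u v + wedge u w := by
  simp only [wedge, Prod.fst_add, Prod.snd_add]; ring

lemma wedge_neg_left : wedge (-u) v = -wedge u v := by
  simp only [wedge, Prod.fst_neg, Prod.snd_neg]; ring

lemma wedge_sub_right : wedge u (v - w) = wedge u v - wedge u w := by
  simp only [wedge, Prod.fst_sub, Prod.snd_sub]; ring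

lemma wedge_smul_left : wedge (c • u) v = c * wedge u v := by
  simp only [wedge, Prod.smul_fst, Prod.smul_snd, smul_eq_mul]; ring

lemma wedge_smul_right : wedge u (c • v) = c * wedge u v := by
  simp only [wedge, Prod.smul_fst, Prod.smul_snd, smul_eq_mul]; ring

/-- Cramer's rule, cleared of denominators. -/
lemma wedge_smul_eq : wedge u v • w = wedge w v • u + wedge u w • v := by
  ext <;> simp only [wedge, Prod.fst_add, Prod.snd_add, Prod.smul_fst, Prod.smul_snd,
    smul_eq_mul] <;> ring

variable {u v}

lemma exists_eq_smul_add_smul_of_wedge_ne_zero (h : wedge u v ≠ 0) :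
    ∃ s t : ℝ, w = s • u + t • v := by
  refine ⟨wedge w v / wedge u v, wedge u w / wedge u v, ?_⟩
  apply smul_right_injective _ h
  simp only [smul_add, smul_smul, mul_div_cancel₀ _ h, wedge_smul_eq u v w]

lemma linearIndependent_pair_of_wedge_ne_zero (h : wedge u v ≠ 0) :
    LinearIndependent ℝ ![u, v] := by
  refine LinearIndependent.pair_iff.mpr fun s t hst => ⟨?_, ?_⟩
  · have : wedge (s • u + t • v) v = 0 := by simp [hst, wedge]
    simpa [wedge_add_left, wedge_smul_left, h] using this
  · have : wedge u (s • u + t • v) = 0 := by simp [hst, wedge]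
    simpa [wedge_add_right, wedge_smul_right, h] using this

end Wedge

lemma lineAngle_mem_Ico (u : ℝ × ℝ) : lineAngle u ∈ Set.Ico 0 Real.pi := by
  have hlow := Complex.neg_pi_lt_arg ⟨u.1, u.2⟩
  have hhigh := Complex.arg_le_pi ⟨u.1, u.2⟩
  have hpi := Real.pi_pos
  unfold lineAngle
  grind

lemma exists_eq_smul_cos_sin_lineAngle (u : ℝ × ℝ) :
    ∃ r : ℝ, u = r • (Real.cos (lineAngle u), Real.sin (lineAngle u)) := by
  set z : ℂ := ⟨u.1, u.2⟩
  have hu : u = ‖z‖ • (Real.cos z.arg, Real.sin z.arg) :=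
    Prod.ext (Complex.norm_mul_cos_arg z).symm (Complex.norm_mul_sin_arg z).symm
  have hangle : lineAngle u = z.arg ∨ lineAngle u = z.arg + Real.pi ∨
      lineAngle u = z.arg - Real.pi := by
    unfold lineAngle
    grind
  rcases hangle with h | h | h <;> rw [h]
  · exact ⟨‖z‖, hu⟩
  · exact ⟨-‖z‖, by simpa [Real.cos_add_pi, Real.sin_add_pi] using hu⟩
  · exact ⟨-‖z‖, by simpa [Real.cos_sub_pi, Real.sin_sub_pi] using hu⟩

lemma wedge_cos_sin (α β : ℝ) :
    wedge (Real.cos α, Real.sin α) (Real.cos β, Real.sin β) = Real.sin (β - α) := by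
  rw [wedge, Real.sin_sub]; ring

lemma sign_sin_eq_sign {x : ℝ} (hlow : -Real.pi < x) (hhigh : x < Real.pi) :
    SignType.sign (Real.sin x) = SignType.sign x := by
  rcases lt_trichotomy x 0 with hx | rfl | hx
  · rw [sign_neg hx, sign_neg (Real.sin_neg_of_neg_of_neg_pi_lt hx hlow)]
  · rw [Real.sin_zero]
  · rw [sign_pos hx, sign_pos (Real.sin_pos_of_pos_of_lt_pi hx hhigh)]

/-- Each vector enters the product twice, so the sign depends only on the three lines they span and
can be read off from the cyclic order of the line angles. -/
lemma wedge_mul_wedge_mul_wedge_nonpos {u v w : ℝ × ℝ}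
    (h : (lineAngle v - lineAngle u) * (lineAngle w - lineAngle v) *
      (lineAngle w - lineAngle u) ≤ 0) :
    wedge u v * wedge v w * wedge u w ≤ 0 := by
  have sign_sin_sub (x y : ℝ × ℝ) : SignType.sign (Real.sin (lineAngle y - lineAngle x)) =
      SignType.sign (lineAngle y - lineAngle x) := by
    have hx := lineAngle_mem_Ico x
    have hy := lineAngle_mem_Ico y
    exact sign_sin_eq_sign (by linarith [hx.2, hy.1]) (by linarith [hx.1, hy.2])
  have hsin : Real.sin (lineAngle v - lineAngle u) * Real.sin (lineAngle w - lineAngle v) *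
      Real.sin (lineAngle w - lineAngle u) ≤ 0 := by
    rw [← sign_nonpos_iff] at h ⊢
    simpa only [sign_mul, sign_sin_sub] using h
  obtain ⟨r, hr⟩ := exists_eq_smul_cos_sin_lineAngle u
  obtain ⟨s, hs⟩ := exists_eq_smul_cos_sin_lineAngle v
  obtain ⟨t, ht⟩ := exists_eq_smul_cos_sin_lineAngle w
  have hwedge : wedge u v * wedge v w * wedge u w = (r * s * t) ^ 2 *
      (Real.sin (lineAngle v - lineAngle u) * Real.sin (lineAngle w - lineAngle v) *
        Real.sin (lineAngle w - lineAngle u)) := by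
    generalize lineAngle u = α, lineAngle v = β, lineAngle w = γ at hr hs ht
    subst hr hs ht
    simp only [wedge_smul_left, wedge_smul_right, wedge_cos_sin]
    ring
  exact hwedge ▸ mul_nonpos_of_nonneg_of_nonpos (sq_nonneg _) hsin

section Fin

variable {n : ℕ}

lemma mul_sub_nonpos_of_btw {R : Type*} [Ring R] [PartialOrder R] [IsOrderedRing R]
    {f : Fin n → R} {i j k : Fin n} (hf : Monotone f) (h : btw k j i) :
    (f j - f i) * (f k - f j) * (f k - f i) ≤ 0 := by
  rcases Fin.btw_iff.mp h with ⟨hkj, hji⟩ | ⟨hji, hik⟩ | ⟨hik, hkj⟩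
  · exact mul_nonpos_of_nonneg_of_nonpos
      (mul_nonneg_of_nonpos_of_nonpos (sub_nonpos.mpr (hf hji)) (sub_nonpos.mpr (hf hkj)))
      (sub_nonpos.mpr (hf (hkj.trans hji)))
  · exact mul_nonpos_of_nonpos_of_nonneg
      (mul_nonpos_of_nonpos_of_nonneg (sub_nonpos.mpr (hf hji))
        (sub_nonneg.mpr (hf (hji.trans hik))))
      (sub_nonneg.mpr (hf hik))
  · exact mul_nonpos_of_nonpos_of_nonneg
      (mul_nonpos_of_nonneg_of_nonpos (sub_nonneg.mpr (hf (hik.trans hkj)))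
        (sub_nonpos.mpr (hf hkj)))
      (sub_nonneg.mpr (hf hik))

lemma fin_btw_add_one_self [NeZero n] (i j : Fin n) : btw (i + 1) j i := by
  obtain ⟨n, rfl⟩ := Nat.exists_eq_succ_of_ne_zero (NeZero.ne n)
  simp only [Fin.btw_iff, Fin.le_def, Fin.val_add_one]
  grind

lemma fin_add_one_ne_self [NeZero n] (hn : 2 ≤ n) (i : Fin n) : i + 1 ≠ i := by
  obtain ⟨n, rfl⟩ := Nat.exists_eq_succ_of_ne_zero (NeZero.ne n)
  grind [Fin.val_add_one]

lemma fin_add_one_add_one_ne_self [NeZero n] (hn : 3 ≤ n) (i : Fin n) : i + 1 + 1 ≠ i := by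
  obtain ⟨n, rfl⟩ := Nat.exists_eq_succ_of_ne_zero (NeZero.ne n)
  grind [Fin.val_add_one]

end Fin

/-- The closed region between the lines of direction `D` through `p` and through `q`; the unordered
interval makes it insensitive to the order of `p` and `q` and to the orientation of `D`. -/
def slab (D p q : ℝ × ℝ) : Set (ℝ × ℝ) :=
  {x | wedge D x ∈ Set.uIcc (wedge D p) (wedge D q)}

lemma mem_slab {D p q x : ℝ × ℝ} : x ∈ slab D p q ↔ wedge D x ∈ Set.uIcc (wedge D p) (wedge D q) :=
  Iff.rfl

lemma slab_subset_slab {D p q p' q' : ℝ × ℝ} (hp : p ∈ slab D p' q') (hq : q ∈ slab D p' q') :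
    slab D p q ⊆ slab D p' q' :=
  fun _ hx => Set.uIcc_subset_uIcc hp hq hx

lemma slab_smul {c : ℝ} (hc : c ≠ 0) (D p q : ℝ × ℝ) : slab (c • D) p q = slab D p q := by
  ext x
  simp only [mem_slab, wedge_smul_left, ← Set.image_const_mul_uIcc]
  exact (mul_right_injective₀ hc).mem_set_image

lemma add_mul_mem_uIcc_iff {𝕜 : Type*} [Field 𝕜] [LinearOrder 𝕜] [IsStrictOrderedRing 𝕜]
    {a b t : 𝕜} (hb : b ≠ 0) : a + t * b ∈ Set.uIcc a (a + b) ↔ t ∈ Set.Icc (0 : 𝕜) 1 := by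
  rw [← segment_eq_uIcc, segment_eq_image']
  simp [hb]

/-- The closed parallelogram with vertex `z` and sides `u`, `u'` issuing from it. -/
def parallelogram (z u u' : ℝ × ℝ) : Set (ℝ × ℝ) :=
  {p | ∃ s t : ℝ, s ∈ Set.Icc (0 : ℝ) 1 ∧ t ∈ Set.Icc (0 : ℝ) 1 ∧ p = z + s • u + t • u'}

lemma slab_inter_slab_eq_parallelogram {u u' : ℝ × ℝ} (h : wedge u u' ≠ 0) (z : ℝ × ℝ) :
    slab u z (z + (u + u')) ∩ slab u' z (z + (u + u')) = parallelogram z u u' := by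
  have mem_inter_iff (s t : ℝ) : z + s • u + t • u' ∈
      slab u z (z + (u + u')) ∩ slab u' z (z + (u + u')) ↔
      s ∈ Set.Icc (0 : ℝ) 1 ∧ t ∈ Set.Icc (0 : ℝ) 1 := by
    have h' : wedge u' u ≠ 0 := by rwa [wedge_swap, neg_ne_zero]
    simp [mem_slab, wedge_add_right, wedge_smul_right, add_mul_mem_uIcc_iff, h, h', and_comm]
  refine Set.Subset.antisymm (fun p hp => ?_) ?_
  · obtain ⟨s, t, hst⟩ := exists_eq_smul_add_smul_of_wedge_ne_zero (p - z) h
    obtain rfl : p = z + s • u + t • u' := by rw [add_assoc, ← hst, add_sub_cancel]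
    obtain ⟨hs, ht⟩ := (mem_inter_iff s t).mp hp
    exact ⟨s, t, hs, ht, rfl⟩
  · rintro _ ⟨s, t, hs, ht, rfl⟩
    exact (mem_inter_iff s t).mpr ⟨hs, ht⟩

lemma volume_parallelogram (z u u' : ℝ × ℝ) :
    volume (parallelogram z u u') = ENNReal.ofReal |wedge u u'| := by
  let L : (ℝ × ℝ) →ₗ[ℝ] (ℝ × ℝ) :=
    (LinearMap.toSpanSingleton ℝ _ u).coprod (LinearMap.toSpanSingleton ℝ _ u')
  have hdet : LinearMap.det L = wedge u u' := by
    rw [← LinearMap.det_toMatrix (Module.Basis.finTwoProd ℝ), Matrix.det_fin_two]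
    simp [LinearMap.toMatrix_apply, L, wedge, mul_comm]
  have himage : parallelogram z u u' =
      (z + ·) '' (L '' (Set.Icc (0 : ℝ) 1 ×ˢ Set.Icc (0 : ℝ) 1)) := by
    ext p
    simp only [parallelogram, Set.mem_image, Set.mem_prod, L]
    constructor
    · rintro ⟨s, t, hs, ht, rfl⟩
      exact ⟨_, ⟨(s, t), ⟨hs, ht⟩, rfl⟩, by simp [add_assoc]⟩
    · rintro ⟨_, ⟨⟨s, t⟩, ⟨hs, ht⟩, rfl⟩, rfl⟩
      exact ⟨s, t, hs, ht, by simp [add_assoc]⟩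
  rw [himage, Set.image_add_left, measure_preimage_add, Measure.addHaar_image_linearMap, hdet,
    Measure.volume_eq_prod, Measure.prod_prod]
  simp

namespace ConvexPolygonSpokes

variable {n : ℕ} [NeZero n] (P : ConvexPolygonSpokes n)

/-- The edge vector leaving vertex `m`, indexed by position along the boundary; `dir` is the same
family indexed by slope. -/
def edge (m : Fin n) : ℝ × ℝ := P.vertex (m + 1) - P.vertex m

lemma edge_σ (i : Fin n) : P.edge (P.σ i) = P.dir i := rfl

lemma dir_σ_symm (m : Fin n) : P.dir (P.σ.symm m) = P.edge m := by
  rw [← edge_σ, Equiv.apply_symm_apply]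

include P in
lemma add_one_ne (m : Fin n) : m + 1 ≠ m :=
  fin_add_one_ne_self (P.three_le.trans' (Nat.le_succ 2)) m

lemma wedge_edge_vertex_le (m k : Fin n) :
    wedge (P.edge m) (P.vertex m) ≤ wedge (P.edge m) (P.vertex k) := by
  rw [← sub_nonneg, ← wedge_sub_right]
  by_cases hkm : k = m
  · simp [hkm, wedge]
  by_cases hkm' : k = m + 1
  · exact (by rw [hkm', ← edge, wedge_self])
  exact (P.convex_ccw m k hkm hkm').le

lemma wedge_edge_vertex_add_one (m : Fin n) :
    wedge (P.edge m) (P.vertex (m + 1)) = wedge (P.edge m) (P.vertex m) := by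
  rw [← sub_eq_zero, ← wedge_sub_right, ← edge, wedge_self]

lemma wedge_edge_edge_add_one_pos (m : Fin n) : 0 < wedge (P.edge m) (P.edge (m + 1)) := by
  have h := P.convex_ccw m (m + 1 + 1) (fin_add_one_add_one_ne_self P.three_le m)
    (P.add_one_ne (m + 1))
  rwa [← edge, wedge_sub_right, ← wedge_edge_vertex_add_one, ← wedge_sub_right, ← edge] at h

lemma wedge_dir_dir_add_one_ne_zero (i : Fin n) : wedge (P.dir i) (P.dir (i + 1)) ≠ 0 :=
  P.no_parallel _ _ (P.σ.injective.ne (P.add_one_ne i).symm)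

lemma wedge_dir_add_one_dir_ne_zero (i : Fin n) : wedge (P.dir (i + 1)) (P.dir i) ≠ 0 :=
  P.no_parallel _ _ (P.σ.injective.ne (P.add_one_ne i))

/-- By convexity the polygon lies in the cone at a vertex spanned by the two adjacent edges. -/
lemma wedge_vertex_add_one_le {F : ℝ × ℝ} {m : Fin n} (hprev : wedge F (P.edge m) ≤ 0)
    (hnext : 0 ≤ wedge F (P.edge (m + 1))) (k : Fin n) :
    wedge F (P.vertex (m + 1)) ≤ wedge F (P.vertex k) := by
  set x := P.vertex k - P.vertex (m + 1)
  have hx : 0 ≤ wedge (P.edge m) x := by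
    rw [wedge_sub_right, wedge_edge_vertex_add_one, sub_nonneg]
    exact P.wedge_edge_vertex_le m k
  have hx' : wedge x (P.edge (m + 1)) ≤ 0 := by
    rw [wedge_swap, wedge_sub_right, neg_nonpos, sub_nonneg]
    exact P.wedge_edge_vertex_le (m + 1) k
  have cramer : wedge (P.edge m) (P.edge (m + 1)) * wedge F x =
      wedge x (P.edge (m + 1)) * wedge F (P.edge m) +
        wedge (P.edge m) x * wedge F (P.edge (m + 1)) := by
    simp only [← wedge_smul_right, ← wedge_add_right, wedge_smul_eq _ _ x]
  have hFx : 0 ≤ wedge F x := by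
    refine nonneg_of_mul_nonneg_right (cramer ▸ ?_) (P.wedge_edge_edge_add_one_pos m)
    exact add_nonneg (mul_nonneg_of_nonpos_of_nonpos hx' hprev) (mul_nonneg hx hnext)
  rwa [wedge_sub_right, sub_nonneg] at hFx

lemma wedge_vertex_le_add_one {F : ℝ × ℝ} {m : Fin n} (hprev : 0 ≤ wedge F (P.edge m))
    (hnext : wedge F (P.edge (m + 1)) ≤ 0) (k : Fin n) :
    wedge F (P.vertex k) ≤ wedge F (P.vertex (m + 1)) := by
  have h := P.wedge_vertex_add_one_le (F := -F) (m := m)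
    (by rwa [wedge_neg_left, neg_nonpos]) (by rwa [wedge_neg_left, neg_nonneg]) k
  rwa [wedge_neg_left, wedge_neg_left, neg_le_neg_iff] at h

lemma wedge_dir_vertex_lt_wedge_dir_w {i k : Fin n} (hk : k ≠ P.wIdx i) :
    wedge (P.dir i) (P.vertex k) < wedge (P.dir i) (P.w i) := by
  have nonneg (k : Fin n) : 0 ≤ wedge (P.dir i) (P.vertex k - P.vertex (P.σ i)) := by
    rw [wedge_sub_right, sub_nonneg]
    exact P.wedge_edge_vertex_le _ k
  have h : |wedge (P.dir i) (P.vertex k - P.vertex (P.σ i))| <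
      |wedge (P.dir i) (P.vertex (P.wIdx i) - P.vertex (P.σ i))| := P.wIdx_farthest i k hk
  rw [abs_of_nonneg (nonneg _), abs_of_nonneg (nonneg _), wedge_sub_right, wedge_sub_right] at h
  exact (sub_lt_sub_iff_right _).mp h

lemma wedge_dir_v (i : Fin n) :
    wedge (P.dir i) (P.v i) = wedge (P.dir i) (P.vertex (P.σ i)) :=
  P.wedge_edge_vertex_add_one (P.σ i)

lemma vertex_mem_slab (i k : Fin n) : P.vertex k ∈ slab (P.dir i) (P.v i) (P.w i) := by
  refine Set.Icc_subset_uIcc ⟨?_, ?_⟩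
  · rw [wedge_dir_v]
    exact P.wedge_edge_vertex_le _ k
  · rcases eq_or_ne k (P.wIdx i) with rfl | hk
    · rfl
    · exact (P.wedge_dir_vertex_lt_wedge_dir_w hk).le

/-- The direction of edge `i + 1`, rescaled to point to the left of edge `i`: only the sign of the
factor matters. -/
def leftDir (i : Fin n) : ℝ × ℝ := wedge (P.dir i) (P.dir (i + 1)) • P.dir (i + 1)

lemma wedge_dir_leftDir_nonneg (i : Fin n) : 0 ≤ wedge (P.dir i) (P.leftDir i) := by
  rw [leftDir, wedge_smul_right]
  exact mul_self_nonneg _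

lemma strictMono_lineAngle_dir : StrictMono fun i => lineAngle (P.dir i) := P.slope_sorted

/-- Consecutive slopes have no slope between them, so no edge lies strictly inside the double cone
spanned by `dir i` and `leftDir i`. -/
lemma wedge_dir_edge_mul_wedge_edge_leftDir_nonpos (i m : Fin n) :
    wedge (P.dir i) (P.edge m) * wedge (P.edge m) (P.leftDir i) ≤ 0 := by
  have h := wedge_mul_wedge_mul_wedge_nonpos (mul_sub_nonpos_of_btw
    P.strictMono_lineAngle_dir.monotone (fin_btw_add_one_self i (P.σ.symm m)))
  rw [dir_σ_symm] at h
  rw [leftDir, wedge_smul_right]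
  linarith

lemma wedge_leftDir_edge_nonneg {i m : Fin n} (h : 0 < wedge (P.dir i) (P.edge m)) :
    0 ≤ wedge (P.leftDir i) (P.edge m) := by
  rw [wedge_swap, neg_nonneg]
  exact nonpos_of_mul_nonpos_right (P.wedge_dir_edge_mul_wedge_edge_leftDir_nonpos i m) h

lemma wedge_leftDir_edge_nonpos {i m : Fin n} (h : wedge (P.dir i) (P.edge m) < 0) :
    wedge (P.leftDir i) (P.edge m) ≤ 0 := by
  rw [wedge_swap, neg_nonpos]
  exact nonneg_of_mul_nonpos_right (P.wedge_dir_edge_mul_wedge_edge_leftDir_nonpos i m) h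

lemma wedge_leftDir_v_le_vertex (i k : Fin n) :
    wedge (P.leftDir i) (P.v i) ≤ wedge (P.leftDir i) (P.vertex k) := by
  refine P.wedge_vertex_add_one_le (m := P.σ i) ?_ ?_ k
  · rw [wedge_swap, neg_nonpos]
    exact P.wedge_dir_leftDir_nonneg i
  · exact P.wedge_leftDir_edge_nonneg (P.wedge_edge_edge_add_one_pos (P.σ i))

lemma wedge_leftDir_vertex_le_w (i k : Fin n) :
    wedge (P.leftDir i) (P.vertex k) ≤ wedge (P.leftDir i) (P.w i) := by
  obtain ⟨m, hm⟩ : ∃ m, m + 1 = P.wIdx i := ⟨P.wIdx i - 1, sub_add_cancel _ _⟩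
  have hw {k : Fin n} (hk : k ≠ m + 1) :
      wedge (P.dir i) (P.vertex k) < wedge (P.dir i) (P.vertex (m + 1)) := by
    rw [hm] at hk ⊢
    exact P.wedge_dir_vertex_lt_wedge_dir_w hk
  rw [w, ← hm]
  refine P.wedge_vertex_le_add_one ?_ ?_ k
  · apply P.wedge_leftDir_edge_nonneg
    rw [edge, wedge_sub_right, sub_pos]
    exact hw (P.add_one_ne m).symm
  · apply P.wedge_leftDir_edge_nonpos
    rw [edge, wedge_sub_right, sub_neg]
    exact hw (P.add_one_ne (m + 1))

lemma vertex_mem_slab_dir_add_one (i k : Fin n) :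
    P.vertex k ∈ slab (P.dir (i + 1)) (P.v i) (P.w i) := by
  rw [← slab_smul (P.wedge_dir_dir_add_one_ne_zero i)]
  exact Set.Icc_subset_uIcc ⟨P.wedge_leftDir_v_le_vertex i k, P.wedge_leftDir_vertex_le_w i k⟩

lemma strip_eq_slab (i : Fin n) : P.strip i = slab (P.dir i) (P.v i) (P.w i) := by
  have hvw : wedge (P.dir i) (P.v i) ≤ wedge (P.dir i) (P.w i) := by
    rw [wedge_dir_v]
    exact P.wedge_edge_vertex_le _ _
  ext x
  rw [mem_slab, Set.uIcc_of_le hvw, Set.mem_Icc, wedge_dir_v]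
  simp only [strip, Set.mem_ofPred_eq, wedge_sub_right, sub_nonneg, sub_le_sub_iff_right]

lemma strip_add_one_eq_slab (i : Fin n) :
    P.strip (i + 1) = slab (P.dir (i + 1)) (P.v i) (P.w i) := by
  rw [strip_eq_slab]
  exact Set.Subset.antisymm
    (slab_subset_slab (P.vertex_mem_slab_dir_add_one i _) (P.vertex_mem_slab_dir_add_one i _))
    (slab_subset_slab (P.vertex_mem_slab (i + 1) _) (P.vertex_mem_slab (i + 1) _))

lemma wedge_sub_ne_zero_of_forall_vertex_mem_slab {D p q : ℝ × ℝ} {m : Fin n}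
    (hm : wedge D (P.edge m) ≠ 0) (hmem : ∀ k, P.vertex k ∈ slab D p q) :
    wedge D (q - p) ≠ 0 := by
  rw [wedge_sub_right, sub_ne_zero]
  intro hpq
  have hconst (k : Fin n) : wedge D (P.vertex k) = wedge D p := by
    simpa [mem_slab, hpq] using hmem k
  exact hm (by rw [edge, wedge_sub_right, hconst, hconst, sub_self])

lemma wedge_dir_a_ne_zero (i : Fin n) : wedge (P.dir i) (P.a i) ≠ 0 := by
  rw [a, wedge_smul_right]
  exact mul_ne_zero two_ne_zero (P.wedge_sub_ne_zero_of_forall_vertex_mem_slab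
    (P.wedge_dir_dir_add_one_ne_zero i) (P.vertex_mem_slab i))

lemma wedge_dir_add_one_a_ne_zero (i : Fin n) : wedge (P.dir (i + 1)) (P.a i) ≠ 0 := by
  rw [a, wedge_smul_right]
  exact mul_ne_zero two_ne_zero (P.wedge_sub_ne_zero_of_forall_vertex_mem_slab
    (P.wedge_dir_add_one_dir_ne_zero i) (P.vertex_mem_slab_dir_add_one i))

lemma a_add_d_eq_smul_dir_add_one (i : Fin n) :
    P.a i + P.d i =
      (wedge (P.dir i) (P.a i) / wedge (P.dir i) (P.dir (i + 1))) • P.dir (i + 1) := by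
  have h := P.wedge_dir_dir_add_one_ne_zero i
  apply smul_right_injective _ h
  simp only [d, smul_add, smul_smul]
  rw [wedge_smul_eq, wedge_swap (P.dir i) (P.dir (i + 1)), wedge_swap (P.a i) (P.dir (i + 1)),
    neg_div_neg_eq, mul_div_cancel₀ _ h, mul_div_cancel₀ _ h]
  module

lemma strip_eq_slab_d (i : Fin n) : P.strip i = slab (P.d i) (P.v i) (P.w i) := by
  have hcoeff := div_ne_zero (neg_ne_zero.mpr (P.wedge_dir_add_one_a_ne_zero i))
    (P.wedge_dir_add_one_dir_ne_zero i)
  rw [d, slab_smul hcoeff, strip_eq_slab]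

lemma strip_add_one_eq_slab_a_add_d (i : Fin n) :
    P.strip (i + 1) = slab (P.a i + P.d i) (P.v i) (P.w i) := by
  have hcoeff := div_ne_zero (P.wedge_dir_a_ne_zero i) (P.wedge_dir_dir_add_one_ne_zero i)
  rw [a_add_d_eq_smul_dir_add_one, slab_smul hcoeff, strip_add_one_eq_slab]

lemma wedge_a_d_ne_zero (i : Fin n) : wedge (P.a i) (P.d i) ≠ 0 := by
  rw [d, wedge_smul_right, wedge_swap (P.dir i) (P.a i)]
  exact mul_ne_zero (div_ne_zero (neg_ne_zero.mpr (P.wedge_dir_add_one_a_ne_zero i))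
    (P.wedge_dir_add_one_dir_ne_zero i)) (neg_ne_zero.mpr (P.wedge_dir_a_ne_zero i))

/-- The side of the parallelogram `strip i ∩ strip (i + 1)` at `v i` along edge `i`. -/
noncomputable def side (i : Fin n) : ℝ × ℝ := -((2⁻¹ : ℝ) • P.d i)

/-- The side of the parallelogram `strip i ∩ strip (i + 1)` at `v i` along edge `i + 1`. -/
noncomputable def otherSide (i : Fin n) : ℝ × ℝ := (2⁻¹ : ℝ) • (P.a i + P.d i)

lemma side_add_otherSide (i : Fin n) : P.side i + P.otherSide i = P.w i - P.v i := by
  rw [side, otherSide, a]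
  module

lemma wedge_side_otherSide (i : Fin n) :
    wedge (P.side i) (P.otherSide i) = wedge (P.a i) (P.d i) / 4 := by
  rw [side, otherSide, wedge_neg_left, wedge_smul_left, wedge_smul_right, wedge_add_right,
    wedge_self, wedge_swap (P.a i) (P.d i)]
  ring

lemma wedge_side_otherSide_ne_zero (i : Fin n) : wedge (P.side i) (P.otherSide i) ≠ 0 := by
  rw [wedge_side_otherSide]
  exact div_ne_zero (P.wedge_a_d_ne_zero i) four_ne_zero

lemma slab_side (i : Fin n) : slab (P.side i) (P.v i) (P.w i) = P.strip i := by
  rw [side, ← neg_smul, slab_smul (by norm_num), strip_eq_slab_d]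

lemma slab_otherSide (i : Fin n) :
    slab (P.otherSide i) (P.v i) (P.w i) = P.strip (i + 1) := by
  rw [otherSide, slab_smul (by norm_num), strip_add_one_eq_slab_a_add_d]

lemma strip_inter_strip_add_one (i : Fin n) :
    P.strip i ∩ P.strip (i + 1) = parallelogram (P.v i) (P.side i) (P.otherSide i) := by
  rw [← slab_inter_slab_eq_parallelogram (P.wedge_side_otherSide_ne_zero i), side_add_otherSide,
    add_sub_cancel, slab_side, slab_otherSide]

end ConvexPolygonSpokes

/-- the intersection of two consecutive strips is a nondegenerate
parallelogram, one of whose diagonals is a translate of the segment from `v i` to `w i`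
and one of whose sides is a translate of `d i / 2`, and its Lebesgue area is
`|a i ∧ d i| / 4`. -/
theorem strip_inter_parallelogram {n : ℕ} [NeZero n] (P : ConvexPolygonSpokes n)
    (i : Fin n) :
    (∃ z u u' : ℝ × ℝ, LinearIndependent ℝ ![u, u'] ∧
      P.strip i ∩ P.strip (i + 1) =
        {p : ℝ × ℝ | ∃ s t : ℝ, s ∈ Set.Icc (0 : ℝ) 1 ∧ t ∈ Set.Icc (0 : ℝ) 1 ∧
          p = z + s • u + t • u'} ∧
      u + u' = P.w i - P.v i ∧
      (u = (2⁻¹ : ℝ) • P.d i ∨ u = -((2⁻¹ : ℝ) • P.d i) ∨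
        u' = (2⁻¹ : ℝ) • P.d i ∨ u' = -((2⁻¹ : ℝ) • P.d i))) ∧
    (MeasureTheory.volume (P.strip i ∩ P.strip (i + 1))).toReal
      = |wedge (P.a i) (P.d i)| / 4 := by
  refine ⟨⟨P.v i, P.side i, P.otherSide i,
    linearIndependent_pair_of_wedge_ne_zero (P.wedge_side_otherSide_ne_zero i),
    P.strip_inter_strip_add_one i, P.side_add_otherSide i, Or.inr (Or.inl rfl)⟩, ?_⟩
  rw [P.strip_inter_strip_add_one, volume_parallelogram, ENNReal.toReal_ofReal (abs_nonneg _),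
    P.wedge_side_otherSide, abs_div, abs_of_pos (zero_lt_four' ℝ)]
end
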